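/- arXiv:1401.3636 — 2 statements merged into one kernel-verified Lean document; each statement's English description precedes it below -/
import Mathlib

section
/- Let φ : ℂ → ℂ be analytic on the open disk {t : |t − 1| < R} for some R > 1, and let a be a complex number such that 2a is not a nonpositive integer or zero and a + 1/2 is not a nonpositive integer or zero. Suppose the double series Σ_{k≥0} Σ_{n≥k} [2^k (a)_k / ((2a)_k k!)] · [(−1)^n (−n)_k / n!] · φ^{(n)}(1) is absolutely summable (so the order of summation may be interchanged). Then Σ_{k=0}^∞ 2^k (a)_k φ^{(k)}(0) / ((2a)_k k!) = Σ_{k=0}^∞ φ^{(2k)}(1) / (2^{2k} (a+1/2)_k k!). -/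
/-- The Pochhammer symbol `(a)_k = a (a+1) ⋯ (a+k-1)`. -/
noncomputable def poch (a : ℂ) (k : ℕ) : ℂ := Polynomial.eval a (ascPochhammer ℂ k)

theorem poch_zero' (a : ℂ) : poch a 0 = 1 := by simp [poch]

theorem poch_succ' (a : ℂ) (k : ℕ) : poch a (k + 1) = poch a k * (a + k) := by
  simp [poch, ascPochhammer_succ_eval]

theorem poch_ne' (a : ℂ) (h : ∀ n : ℕ, a ≠ -(n : ℂ)) (k : ℕ) : poch a k ≠ 0 := by
  induction k with
  | zero => simp [poch_zero']
  | succ k ih =>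
    rw [poch_succ']
    exact mul_ne_zero ih (fun h0 => h k (by linear_combination h0))

theorem poch_neg' (k m : ℕ) :
    poch (-((k + m : ℕ) : ℂ)) k * (m.factorial : ℂ) = (-1) ^ k * ((k + m).factorial : ℂ) := by
  induction k generalizing m with
  | zero => simp [poch_zero']
  | succ k ih =>
    have h := ih (m + 1)
    rw [show k + 1 + m = k + (m + 1) by ring, poch_succ']
    rw [Nat.factorial_succ m] at h
    push_cast at h ⊢
    rw [pow_succ]
    linear_combination (-1) * h

/-- coefficients of the hypergeometric factor -/
noncomputable def cc (a : ℂ) (k : ℕ) : ℂ :=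
  2 ^ k * poch a k / (poch (2 * a) k * (k.factorial : ℂ))

noncomputable def ee (k : ℕ) : ℂ := (-1) ^ k / (k.factorial : ℂ)

theorem cc_succ (a : ℂ) (h : ∀ n : ℕ, 2 * a ≠ -(n : ℂ)) (k : ℕ) :
    (k + 1) * (2 * a + k) * cc a (k + 1) = 2 * (a + k) * cc a k := by
  have h1 := poch_ne' (2 * a) h k
  have h2 : (2 * a + k) ≠ 0 := fun h0 => h k (by linear_combination h0)
  have h3 : (k.factorial : ℂ) ≠ 0 := by exact_mod_cast k.factorial_ne_zero
  have h4 : (k + 1 : ℂ) ≠ 0 := by exact_mod_cast k.succ_ne_zero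
  unfold cc
  rw [poch_succ', poch_succ', Nat.factorial_succ]
  push_cast
  field_simp
  ring

theorem ee_succ (k : ℕ) : (k + 1) * ee (k + 1) = - ee k := by
  have h3 : (k.factorial : ℂ) ≠ 0 := by exact_mod_cast k.factorial_ne_zero
  have h4 : (k + 1 : ℂ) ≠ 0 := by exact_mod_cast k.succ_ne_zero
  unfold ee
  rw [Nat.factorial_succ]
  push_cast
  field_simp
  ring

noncomputable def gg (a : ℂ) (n : ℕ) : ℂ :=
  ∑ p ∈ Finset.HasAntidiagonal.antidiagonal n, cc a p.1 * ee p.2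

open PowerSeries in
theorem gg_rec (a : ℂ) (h : ∀ n : ℕ, 2 * a ≠ -(n : ℂ)) (n : ℕ) :
    (n + 2) * (2 * a + n + 1) * gg a (n + 2) = gg a n := by
  let F : PowerSeries ℂ := PowerSeries.mk (cc a)
  let E : PowerSeries ℂ := PowerSeries.mk ee
  let D := PowerSeries.derivative ℂ
  have hE : D E = - E := by
    ext k
    simp only [D, E, coeff_derivative, coeff_mk, map_neg]
    linear_combination ee_succ k
  have hF : X * D (D F) + (C (2 * a) - C 2 * X) * D F - C (2 * a) * F = 0 := by
    ext k
    have h0 := cc_succ a h k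
    rcases k with _ | k
    · simp only [D, F, sub_mul, mul_assoc, coeff_derivative, coeff_zero_X_mul, coeff_mk, map_sub,
        map_add, coeff_C_mul, map_zero]
      push_cast at h0 ⊢
      linear_combination h0
    · simp only [D, F, sub_mul, mul_assoc, coeff_derivative, coeff_succ_X_mul, coeff_mk, map_sub,
        map_add, coeff_C_mul, map_zero]
      push_cast at h0 ⊢
      linear_combination h0
  have hG1 : D (F * E) = E * (D F - F) := by
    rw [Derivation.leibniz, hE, smul_eq_mul, smul_eq_mul]; ring
  have hG2 : D (D (F * E)) = E * (D (D F) - 2 * D F + F) := by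
    rw [hG1, Derivation.leibniz, hE, smul_eq_mul, smul_eq_mul, map_sub]; ring
  have hG : X * D (D (F * E)) + C (2 * a) * D (F * E) - X * (F * E) = 0 := by
    rw [hG2, hG1]
    have : (C (2 : ℂ)) = (2 : PowerSeries ℂ) := map_ofNat C 2
    rw [this] at hF
    linear_combination E * hF
  have hc : ∀ n, coeff n (F * E) = gg a n := by
    intro n
    simp [coeff_mul, F, E, gg]
  have := congrArg (coeff (n + 1)) hG
  simp only [D, coeff_derivative, coeff_succ_X_mul, hc, map_sub, map_add, coeff_C_mul,
    map_zero] at this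
  push_cast at this
  linear_combination this

theorem gg_odd (a : ℂ) (h : ∀ n : ℕ, 2 * a ≠ -(n : ℂ)) (n : ℕ) : gg a (2 * n + 1) = 0 := by
  induction n with
  | zero =>
    have h0 : a ≠ 0 := fun h0 => h 0 (by simp [h0])
    simp [gg, Finset.HasAntidiagonal.antidiagonal, Finset.Nat.antidiagonal_succ, cc, ee, poch_zero', poch_succ']
    field_simp
    ring
  | succ n ih =>
    have h1 := gg_rec a h (2 * n + 1)
    rw [ih] at h1
    rw [show 2 * (n + 1) + 1 = 2 * n + 1 + 2 by ring]
    refine (mul_eq_zero.1 h1).resolve_left (mul_ne_zero ?_ ?_)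
    · exact_mod_cast (by omega : 2 * n + 1 + 2 ≠ 0)
    · intro h0
      exact h (2 * n + 2) (by push_cast at h0 ⊢; linear_combination h0)

theorem gg_even (a : ℂ) (h : ∀ n : ℕ, 2 * a ≠ -(n : ℂ))
    (ha : ∀ n : ℕ, a + 1 / 2 ≠ -(n : ℂ)) (n : ℕ) :
    gg a (2 * n) = 1 / (2 ^ (2 * n) * poch (a + 1 / 2) n * (n.factorial : ℂ)) := by
  induction n with
  | zero => simp [gg, cc, ee, poch_zero']
  | succ n ih =>
    have h1 := gg_rec a h (2 * n)
    have h2 : a + 1 / 2 + n ≠ 0 := fun h0 => ha n (by linear_combination h0)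
    have h3 : (n.factorial : ℂ) ≠ 0 := by exact_mod_cast n.factorial_ne_zero
    have h4 : (n + 1 : ℂ) ≠ 0 := by exact_mod_cast n.succ_ne_zero
    have h5 := poch_ne' _ ha n
    rw [ih] at h1
    rw [show 2 * (n + 1) = 2 * n + 2 by ring, poch_succ', Nat.factorial_succ]
    have h6 : (4 * (n + 1) * (a + 1 / 2 + n) : ℂ) ≠ 0 :=
      mul_ne_zero (mul_ne_zero (by norm_num) h4) h2
    apply mul_left_cancel₀ h6
    have h7 : (4 * (n + 1) * (a + 1 / 2 + n) : ℂ) * gg a (2 * n + 2)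
      = 1 / (2 ^ (2 * n) * poch (a + 1 / 2) n * (n.factorial : ℂ)) := by
      rw [← h1]; push_cast; ring
    rw [h7, pow_add]
    push_cast
    generalize poch (a + 1 / 2) n = P at *
    generalize a + 1 / 2 + (n : ℂ) = Q at *
    field_simp
    norm_num

theorem taylor_aux (φ : ℂ → ℂ) (R : ℝ) (hR : 1 < R)
    (hφ : AnalyticOnNhd ℂ φ (Metric.ball (1 : ℂ) R)) (k : ℕ) :
    HasSum (fun m : ℕ => ee m * iteratedDeriv (k + m) φ 1) (iteratedDeriv k φ 0) := by
  have hd : DifferentiableOn ℂ (iteratedDeriv k φ) (Metric.ball (1 : ℂ) R) := by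
    rw [iteratedDeriv_eq_iterate]
    exact (hφ.iterated_deriv k).differentiableOn
  have h := Complex.hasSum_taylorSeries_on_ball hd (z := 0) (by simpa using hR)
  suffices hfun : (fun m : ℕ => ee m * iteratedDeriv (k + m) φ 1) = fun n : ℕ =>
      ((n.factorial : ℂ))⁻¹ • ((0 : ℂ) - 1) ^ n • iteratedDeriv n (iteratedDeriv k φ) 1 by
    rw [hfun]; exact h
  funext m
  rw [iteratedDeriv_eq_iterate, iteratedDeriv_eq_iterate, iteratedDeriv_eq_iterate,
    ← Function.iterate_add_apply, add_comm m k]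
  simp [ee, div_eq_mul_inv]
  ring

/-- Ramanujan's Entry 8: if `φ` is analytic on a disk of radius `R > 1` about `1` and the
double series may be summed in either order, then
`Σ_{k≥0} 2^k (a)_k φ^{(k)}(0) / ((2a)_k k!) = Σ_{k≥0} φ^{(2k)}(1) / (2^{2k} (a+1/2)_k k!)`. -/
theorem ramanujan_entry8
    (φ : ℂ → ℂ) (R : ℝ) (hR : 1 < R)
    (hφ : AnalyticOnNhd ℂ φ (Metric.ball (1 : ℂ) R))
    (a : ℂ)
    (h2a : ∀ n : ℕ, 2 * a ≠ -(n : ℂ))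
    (ha : ∀ n : ℕ, a + 1 / 2 ≠ -(n : ℂ))
    (hsum : Summable (fun p : ℕ × ℕ =>
      ‖(2 ^ p.1 * poch a p.1 / (poch (2 * a) p.1 * (Nat.factorial p.1 : ℂ))) *
        ((-1 : ℂ) ^ (p.1 + p.2) * poch (-(((p.1 + p.2 : ℕ)) : ℂ)) p.1 /
          (Nat.factorial (p.1 + p.2) : ℂ)) * iteratedDeriv (p.1 + p.2) φ 1‖)) :
    ∑' k : ℕ, 2 ^ k * poch a k * iteratedDeriv k φ 0 /
        (poch (2 * a) k * (Nat.factorial k : ℂ))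
      = ∑' k : ℕ, iteratedDeriv (2 * k) φ 1 /
          (2 ^ (2 * k) * poch (a + 1 / 2) k * (Nat.factorial k : ℂ)) := by
  have key : ∀ p : ℕ × ℕ,
      (2 ^ p.1 * poch a p.1 / (poch (2 * a) p.1 * (Nat.factorial p.1 : ℂ))) *
        ((-1 : ℂ) ^ (p.1 + p.2) * poch (-(((p.1 + p.2 : ℕ)) : ℂ)) p.1 /
          (Nat.factorial (p.1 + p.2) : ℂ)) * iteratedDeriv (p.1 + p.2) φ 1
      = cc a p.1 * ee p.2 * iteratedDeriv (p.1 + p.2) φ 1 := by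
    rintro ⟨k, m⟩
    have h1 := poch_neg' k m
    have h3 : (m.factorial : ℂ) ≠ 0 := by exact_mod_cast m.factorial_ne_zero
    have h4 : ((k + m).factorial : ℂ) ≠ 0 := by exact_mod_cast (k + m).factorial_ne_zero
    have h5 : (-1 : ℂ) ^ k * (-1) ^ k = 1 := by rw [← mul_pow]; simp
    have : ((-1 : ℂ) ^ (k + m) * poch (-(((k + m : ℕ)) : ℂ)) k /
          (Nat.factorial (k + m) : ℂ)) = ee m := by
      rw [ee, div_eq_div_iff h4 h3, mul_assoc, h1, pow_add]
      linear_combination ((-1) ^ m * ((k + m).factorial : ℂ)) * h5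
    simp only [this, cc]
  simp only [key] at hsum
  have hs : Summable (fun p : ℕ × ℕ => cc a p.1 * ee p.2 * iteratedDeriv (p.1 + p.2) φ 1) :=
    hsum.of_norm
  have hT := taylor_aux φ R hR hφ
  have hL : ∑' k : ℕ, 2 ^ k * poch a k * iteratedDeriv k φ 0 /
        (poch (2 * a) k * (Nat.factorial k : ℂ))
      = ∑' p : ℕ × ℕ, cc a p.1 * ee p.2 * iteratedDeriv (p.1 + p.2) φ 1 := by
    rw [hs.tsum_prod]
    refine tsum_congr fun k => ?_
    simp only [mul_assoc]
    rw [((hT k).mul_left (cc a k)).tsum_eq, cc]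
    ring
  have hM : ∑' p : ℕ × ℕ, cc a p.1 * ee p.2 * iteratedDeriv (p.1 + p.2) φ 1
      = ∑' n : ℕ, gg a n * iteratedDeriv n φ 1 := by
    rw [← Finset.HasAntidiagonal.sigmaAntidiagonalEquivProd.tsum_eq]
    refine (Summable.tsum_sigma (Finset.HasAntidiagonal.sigmaAntidiagonalEquivProd.summable_iff.2 hs)).trans ?_
    refine tsum_congr fun n => ?_
    rw [tsum_fintype, gg, Finset.sum_mul, ← Finset.sum_coe_sort (Finset.HasAntidiagonal.antidiagonal n)]
    refine Finset.sum_congr rfl fun p _ => ?_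
    have := Finset.HasAntidiagonal.mem_antidiagonal.1 p.2
    simp only [Function.comp, Finset.HasAntidiagonal.sigmaAntidiagonalEquivProd_apply]
    rw [this]
  have hinj : Function.Injective (fun k : ℕ => 2 * k) := fun x y h => by
    simp only at h; omega
  rw [hL, hM, ← hinj.tsum_eq]
  · refine tsum_congr fun k => ?_
    rw [gg_even a h2a ha]
    ring
  · intro n hn
    rcases Nat.even_or_odd' n with ⟨c, rfl | rfl⟩
    · exact ⟨c, rfl⟩
    · exact absurd (by simp [gg_odd a h2a]) hn
end

section
/- Let n be a natural number and let a, d be complex numbers such that (2a+1)_k ≠ 0 and (d)_k ≠ 0 for all 0 ≤ k ≤ 2n+1, d ≠ 0, 2a+1 ≠ 0, and (a+3/2)_n ≠ 0. Then the terminating hypergeometric sum Σ_{k=0}^{2n+1} (−2n−1)_k (a)_k (d+1)_k 2^k / ((2a+1)_k (d)_k k!) equals ((1 − 2a/d)/(2a+1)) · (3/2)_n / (a+3/2)_n. -/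
theorem poch_shift (d : ℂ) (k : ℕ) : poch (d + 1) k * d = poch d k * (d + k) := by
  induction k with
  | zero => simp [poch_zero']
  | succ k ih =>
    rw [poch_succ', poch_succ']
    push_cast
    linear_combination (d + 1 + k) * ih

theorem poch_neg (N k : ℕ) :
    poch (-(N : ℂ)) k = (-1) ^ k * (Nat.factorial k : ℂ) * (N.choose k : ℂ) := by
  induction k with
  | zero => simp [poch_zero']
  | succ k ih =>
    have h : (N.choose (k + 1) : ℂ) * (k + 1) = N.choose k * (N - k) := by
      rcases le_or_gt k N with hk | hk
      · have := Nat.choose_succ_right_eq N k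
        rw [← Nat.cast_sub hk]
        exact_mod_cast this
      · rw [Nat.choose_eq_zero_of_lt hk, Nat.choose_eq_zero_of_lt (by omega)]
        simp
    rw [poch_succ', ih, Nat.factorial_succ, pow_succ]
    push_cast
    linear_combination (-1) ^ k * (Nat.factorial k : ℂ) * h

/-- Binomial transform. -/
noncomputable def binT (u : ℕ → ℂ) (N : ℕ) : ℂ :=
  ∑ k ∈ Finset.range (N + 1), (N.choose k : ℂ) * u k

theorem binT_succ (u : ℕ → ℂ) (N : ℕ) :
    binT u (N + 1) = binT u N + binT (fun k => u (k + 1)) N := by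
  have h : binT u N = ∑ k ∈ Finset.range (N + 2), (N.choose k : ℂ) * u k := by
    rw [Finset.sum_range_succ, Nat.choose_succ_self]
    simp [binT]
  rw [h]
  unfold binT
  rw [Finset.sum_range_succ', Finset.sum_range_succ' _ (N + 1)]
  have : ∀ k, ((N + 1).choose (k + 1) : ℂ) * u (k + 1)
      = (N.choose (k + 1) : ℂ) * u (k + 1) + (N.choose k : ℂ) * u (k + 1) := by
    intro k
    rw [Nat.choose_succ_succ]
    push_cast
    ring
  simp only [this, Finset.sum_add_distrib, Nat.choose_zero_right]
  ring

theorem binT_mul (u : ℕ → ℂ) (N : ℕ) :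
    binT (fun k => (k : ℂ) * u k) (N + 1) = (N + 1) * (binT u (N + 1) - binT u N) := by
  rw [binT_succ u N, add_sub_cancel_left]
  unfold binT
  rw [Finset.sum_range_succ', Finset.mul_sum]
  simp only [Nat.cast_zero, zero_mul, mul_zero, add_zero]
  refine Finset.sum_congr rfl fun k _ => ?_
  have h : ((N : ℂ) + 1) * N.choose k = (N + 1).choose (k + 1) * (k + 1) := by
    exact_mod_cast Nat.add_one_mul_choose_eq N k
  push_cast
  linear_combination -u (k + 1) * h

theorem binT_rec (u : ℕ → ℂ) (a : ℂ) (M : ℕ)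
    (hu : ∀ k ≤ M + 1, (2 * a + 1 + k) * u (k + 1) = -2 * (a + k) * u k) :
    (2 * a + 2 + M) * binT u (M + 2) = binT u (M + 1) + (M + 1) * binT u M := by
  have key : (2 * a + 1) * binT (fun k => u (k + 1)) (M + 1)
      + binT (fun k => (k : ℂ) * u (k + 1)) (M + 1)
      = -2 * a * binT u (M + 1) - 2 * binT (fun k => (k : ℂ) * u k) (M + 1) := by
    unfold binT
    rw [Finset.mul_sum, Finset.mul_sum, Finset.mul_sum, ← Finset.sum_add_distrib,
      ← Finset.sum_sub_distrib]
    refine Finset.sum_congr rfl fun k hk => ?_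
    have := hu k (by have := Finset.mem_range.1 hk; omega)
    linear_combination ((M + 1).choose k : ℂ) * this
  rw [binT_mul (fun k => u (k + 1)), binT_mul u] at key
  have e1 := binT_succ u (M + 1)
  have e0 := binT_succ u M
  linear_combination key + (2 * a + 2 + M) * e1 - (M + 1) * e0

theorem binT_closed (u : ℕ → ℂ) (a : ℂ) (n : ℕ) (h0 : u 0 = 1)
    (hne : ∀ k ≤ 2 * n, 2 * a + 1 + (k : ℂ) ≠ 0)
    (hu : ∀ k ≤ 2 * n, (2 * a + 1 + k) * u (k + 1) = -2 * (a + k) * u k) :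
    binT u (2 * n + 1) = 1 / (2 * a + 1) * (poch (3 / 2) n / poch (a + 3 / 2) n) ∧
    (2 * n + 1) * binT u (2 * n) =
      (2 * n + 1 + 2 * a) * (1 / (2 * a + 1) * (poch (3 / 2) n / poch (a + 3 / 2) n)) := by
  induction n with
  | zero =>
    have h1 := hne 0 (by simp)
    have h2 := hu 0 (by simp)
    simp only [Nat.cast_zero, add_zero, h0, zero_add] at h1 h2
    simp only [binT, poch_zero', Finset.sum_range_succ, Finset.sum_range_zero, h0]
    norm_num
    constructor
    · field_simp
      linear_combination h2
    · field_simp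
      ring
  | succ n ih =>
    obtain ⟨i1, i2⟩ := ih (fun k hk => hne k (by omega)) (fun k hk => hu k (by omega))
    have hX : poch (3 / 2) (n + 1) / poch (a + 3 / 2) (n + 1)
        = (poch (3 / 2) n / poch (a + 3 / 2) n) * ((3 / 2 + n) / (a + 3 / 2 + n)) := by
      rw [poch_succ', poch_succ', mul_div_mul_comm]
    rw [hX]
    generalize poch (3 / 2) n / poch (a + 3 / 2) n = X at *
    have r1 := binT_rec u a (2 * n) (fun k hk => hu k (by omega))
    have r2 := binT_rec u a (2 * n + 1) (fun k hk => hu k (by omega))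
    have n0 : 2 * a + 1 ≠ 0 := by simpa using hne 0 (by simp)
    have n1 := hne (2 * n + 1) (by omega)
    have n2 := hne (2 * n + 2) (by omega)
    push_cast at r1 r2 n1 n2
    have n3 : a + 3 / 2 + (n : ℂ) ≠ 0 := by
      intro h
      apply n2
      linear_combination 2 * h
    have f2 : binT u (2 * n + 2) = 1 / (2 * a + 1) * X := by
      apply mul_left_cancel₀ n1
      linear_combination r1 + i1 + i2
    rw [show 2 * n + 1 + 1 = 2 * n + 2 by rfl, f2, i1] at r2
    have hXX : (a + 3 / 2 + n) * (1 / (2 * a + 1) * (X * ((3 / 2 + n) / (a + 3 / 2 + n))))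
        = (3 / 2 + n) * (1 / (2 * a + 1) * X) := by
      have : (a + 3 / 2 + n) * ((3 / 2 + n) / (a + 3 / 2 + n)) = 3 / 2 + (n : ℂ) := by
        rw [← mul_div_assoc]
        exact mul_div_cancel_left₀ (3 / 2 + (n : ℂ)) n3
      linear_combination (1 / (2 * a + 1) * X) * this
    rw [show 2 * (n + 1) = 2 * n + 2 by ring, f2]
    push_cast
    constructor
    · apply mul_left_cancel₀ n2
      linear_combination r2 - 2 * hXX
    · linear_combination -2 * hXX

/-- Terminating `₃F₂(2)` summation (odd case):
`₃F₂(-2n-1, a, d+1; 2a+1, d; 2) = ((1-2a/d)/(2a+1)) (3/2)_n / (a+3/2)_n`. -/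
theorem terminating_3F2_odd
    (n : ℕ) (a d : ℂ)
    (h2a1 : ∀ k ≤ 2 * n + 1, poch (2 * a + 1) k ≠ 0)
    (hd : ∀ k ≤ 2 * n + 1, poch d k ≠ 0)
    (hd0 : d ≠ 0)
    (h2a10 : 2 * a + 1 ≠ 0)
    (ha : poch (a + 3 / 2) n ≠ 0) :
    ∑ k ∈ Finset.range (2 * n + 2),
        poch (-((2 * n + 1 : ℕ) : ℂ)) k * poch a k * poch (d + 1) k * 2 ^ k /
          (poch (2 * a + 1) k * poch d k * (Nat.factorial k : ℂ))
      = ((1 - 2 * a / d) / (2 * a + 1)) * (poch (3 / 2) n / poch (a + 3 / 2) n) := by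
  have hfac : ∀ k ≤ 2 * n, 2 * a + 1 + (k : ℂ) ≠ 0 := by
    intro k hk h
    apply h2a1 (k + 1) (by omega)
    rw [poch_succ', h, mul_zero]
  set u : ℕ → ℂ := fun k => (-2) ^ k * poch a k / poch (2 * a + 1) k with hu_def
  have hu : ∀ k ≤ 2 * n, (2 * a + 1 + k) * u (k + 1) = -2 * (a + k) * u k := by
    intro k hk
    have h1 := hfac k hk
    have h2 := h2a1 k (by omega)
    simp only [hu_def, poch_succ', pow_succ]
    field_simp
  obtain ⟨c1, c2⟩ := binT_closed u a n (by simp [hu_def, poch_zero']) hfac hu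
  have hsum : ∑ k ∈ Finset.range (2 * n + 2),
        poch (-((2 * n + 1 : ℕ) : ℂ)) k * poch a k * poch (d + 1) k * 2 ^ k /
          (poch (2 * a + 1) k * poch d k * (Nat.factorial k : ℂ))
      = binT u (2 * n + 1) + 1 / d * binT (fun k => (k : ℂ) * u k) (2 * n + 1) := by
    unfold binT
    rw [Finset.mul_sum, ← Finset.sum_add_distrib]
    refine Finset.sum_congr rfl fun k hk => ?_
    have hk' : k ≤ 2 * n + 1 := by have := Finset.mem_range.1 hk; omega
    have h1 := h2a1 k hk'
    have h2 := hd k hk'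
    have h3 : (Nat.factorial k : ℂ) ≠ 0 := by exact_mod_cast Nat.factorial_ne_zero k
    have h4 : poch (d + 1) k = poch d k * (d + k) / d := by
      rw [eq_div_iff hd0, poch_shift]
    have h5 : (-2 : ℂ) ^ k = (-1) ^ k * 2 ^ k := by rw [← mul_pow]; norm_num
    simp only [hu_def]
    rw [poch_neg, h4, h5]
    field_simp
  rw [hsum, binT_mul, c1]
  push_cast
  generalize poch (3 / 2) n / poch (a + 3 / 2) n = X at *
  have : (2 * (n : ℂ) + 1) * (1 / (2 * a + 1) * X - binT u (2 * n))
      = -2 * a * (1 / (2 * a + 1) * X) := by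
    linear_combination -c2
  rw [this]
  field_simp
  ring
end
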